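/- Suppose a contraction map f exists for the inequality pattern (α, β, x, y). Then for every family of noncrossing colorings c_l of ZMod N (l ∈ Fin L) such that each c_l is admissible for the left-hand-side region I_l, there exists a family of noncrossing colorings c'_r of ZMod N (r ∈ Fin R) such that each c'_r is admissible for the right-hand-side region J_r and Σ_{l} α_l h_{c_l}(i,j) ≥ Σ_{r} β_r h_{c'_r}(i,j) for all i, j ∈ ZMod N. (This is the existence of a winning strategy in the adversarial coloring game, the combinatorial heart of the paper's main theorem.) -/

import Mathlib

/-- A coloring `c : ZMod n → C` is *noncrossing* if there are no indices with integer
representatives `0 ≤ p < q < r < s ≤ n − 1` such that `c p = c r`, `c q = c s`, and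
`c p ≠ c q`. -/
def Noncrossing {n : ℕ} {C : Type*} (c : ZMod n → C) : Prop :=
  ¬ ∃ p q r s : ℕ, p < q ∧ q < r ∧ r < s ∧ s ≤ n - 1 ∧
    c (p : ZMod n) = c (r : ZMod n) ∧ c (q : ZMod n) = c (s : ZMod n) ∧
    c (p : ZMod n) ≠ c (q : ZMod n)

/-- The *coloring graph* of a coloring `c : ZMod n → C`: vertices are the colors in the
range of `c`, with an edge joining `c i` and `c (i+1)` for each `i` with `c i ≠ c (i+1)`. -/
def coloringGraph {n : ℕ} {C : Type*} (c : ZMod n → C) :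
    SimpleGraph (Set.range c) :=
  SimpleGraph.fromRel (fun a b => ∃ i : ZMod n, c i = a.1 ∧ c (i + 1) = b.1)

/-- The color `c i`, as a vertex of the coloring graph. -/
def vert {n : ℕ} {C : Type*} (c : ZMod n → C) (i : ZMod n) : Set.range c :=
  ⟨c i, ⟨i, rfl⟩⟩

/-- The *overlap number* `h_c(i,j)`: the graph distance between the colors `c i` and `c j`
in the coloring graph of `c`. -/
noncomputable def overlap {n : ℕ} {C : Type*} (c : ZMod n → C) (i j : ZMod n) : ℕ :=
  (coloringGraph c).dist (vert c i) (vert c j)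

/-- A coloring `c` is *admissible* for a subset `I ⊆ ZMod N` if `c i = c j` implies
`(i ∈ I ↔ j ∈ I)`. -/
def Admissible {N : ℕ} {C : Type*} (c : ZMod N → C) (I : Set (ZMod N)) : Prop :=
  ∀ i j : ZMod N, c i = c j → (i ∈ I ↔ j ∈ I)

/-- `f : (Fin L → Bool) → (Fin R → Bool)` is a *contraction* for the weights `α, β` if
`Σ_l α_l |v l − w l| ≥ Σ_r β_r |(f v) r − (f w) r|` for all `v, w`, identifying `Bool`
with `{0,1} ⊆ ℝ`. -/
def IsContraction {L R : ℕ} (α : Fin L → ℝ) (β : Fin R → ℝ)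
    (f : (Fin L → Bool) → (Fin R → Bool)) : Prop :=
  ∀ v w : Fin L → Bool,
    ∑ r, β r * |(((f v) r).toNat : ℝ) - (((f w) r).toNat : ℝ)| ≤
      ∑ l, α l * |((v l).toNat : ℝ) - ((w l).toNat : ℝ)|


/-- `0` if the bits agree, `1` otherwise. -/
def bcost (a b : Bool) : ℕ := if a = b then 0 else 1

lemma bcost_comm (a b : Bool) : bcost a b = bcost b a := by
  cases a <;> cases b <;> rfl

lemma bcost_le_one (a b : Bool) : bcost a b ≤ 1 := by
  cases a <;> cases b <;> decide

lemma bcost_parity (a b d : Bool) : (bcost a b + bcost b d) % 2 = bcost a d := by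
  cases a <;> cases b <;> cases d <;> rfl

lemma bcost_parity' (n : ℕ) (a b d : Bool) (h : n % 2 = bcost a b) :
    (n + bcost b d) % 2 = bcost a d := by
  rw [← bcost_parity a b d, Nat.add_mod, h]; simp [Nat.add_mod]

/-! ### Left-hand side: from a noncrossing coloring to a height function -/

/-- Reachability from index `0`, counting bit changes. -/
inductive CR {N : ℕ} {C : Type*} (c : ZMod N → C) (s : ZMod N → Bool) : ℕ → ℕ → Prop
  | start : CR c s 0 0
  | jump {i j n : ℕ} : CR c s i n → j < N → c (i : ZMod N) = c (j : ZMod N) → CR c s j n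
  | step {i j n : ℕ} : CR c s i n → j < N →
      (j = i + 1 ∨ i = j + 1 ∨ (i = 0 ∧ j = N - 1) ∨ (j = 0 ∧ i = N - 1)) →
      CR c s j (n + bcost (s (i : ZMod N)) (s (j : ZMod N)))

lemma CR.lt {N : ℕ} [NeZero N] {C : Type*} {c : ZMod N → C} {s : ZMod N → Bool} {i n : ℕ}
    (h : CR c s i n) : i < N := by
  cases h with
  | start => exact Nat.pos_of_ne_zero (NeZero.ne N)
  | jump _ h _ => exact h
  | step _ h _ => exact h

lemma CR.parity {N : ℕ} {C : Type*} {c : ZMod N → C} {s : ZMod N → Bool}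
    (hs : ∀ i j, c i = c j → s i = s j) {i n : ℕ}
    (h : CR c s i n) : n % 2 = bcost (s 0) (s (i : ZMod N)) := by
  induction h with
  | start => simp [bcost]
  | jump _ _ he ih => rw [ih, hs _ _ he]
  | step _ _ _ ih => exact bcost_parity' _ _ _ _ ih

lemma CR.exists {N : ℕ} {C : Type*} (c : ZMod N → C) (s : ZMod N → Bool)
    (i : ℕ) (hi : i < N) : ∃ n, CR c s i n := by
  induction i with
  | zero => exact ⟨0, CR.start⟩
  | succ k ih =>
    obtain ⟨n, hn⟩ := ih (by omega)
    exact ⟨_, CR.step hn hi (Or.inl rfl)⟩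

lemma CR.enter {N : ℕ} [NeZero N] {C : Type*} {c : ZMod N → C} {s : ZMod N → Bool}
    (hnc : Noncrossing c) {a b : ℕ} (hab : a ≤ b) (hb : b < N)
    (hc : c (a : ZMod N) = c (b : ZMod N)) {m n : ℕ} (h : CR c s m n) :
    a ≤ m → m ≤ b → ∃ m' n' : ℕ, n' ≤ n ∧ c (m' : ZMod N) = c (a : ZMod N) ∧ CR c s m' n' := by
  induction h with
  | start =>
    intro h1 h2
    have : a = 0 := by omega
    subst this
    exact ⟨0, 0, le_rfl, rfl, CR.start⟩
  | @jump i j n hi hj he ih =>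
    intro h1 h2
    by_cases hin : a ≤ i ∧ i ≤ b
    · exact ih hin.1 hin.2
    have hiN := hi.lt
    by_cases hca : c (i : ZMod N) = c (a : ZMod N)
    · exact ⟨i, n, le_rfl, hca, hi⟩
    exfalso
    have hja : j ≠ a := by rintro rfl; exact hca he
    have hjb : j ≠ b := by rintro rfl; exact hca (he.trans hc.symm)
    apply hnc
    by_cases hia : i < a
    · exact ⟨i, a, j, b, hia, by omega, by omega, by omega, he, hc, hca⟩
    · exact ⟨a, j, b, i, by omega, by omega, by omega, by omega, hc, he.symm,
        fun h => hca (he.trans h.symm)⟩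
  | @step i j n hi hj he ih =>
    intro h1 h2
    by_cases hin : a ≤ i ∧ i ≤ b
    · obtain ⟨m', n', h3, h4, h5⟩ := ih hin.1 hin.2
      exact ⟨m', n', by omega, h4, h5⟩
    have hiN := hi.lt
    refine ⟨j, _, le_rfl, ?_, CR.step hi hj he⟩
    have : j = a ∨ j = b := by clear ih; omega
    rcases this with rfl | rfl
    · rfl
    · exact hc.symm

lemma val_succ_cases {N : ℕ} [NeZero N] (i : ZMod N) :
    (i + 1).val = i.val + 1 ∨ ((i + 1).val = 0 ∧ i.val = N - 1) := by
  have h1 := ZMod.val_lt i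
  rw [ZMod.val_add]
  rcases Nat.lt_or_ge 1 N with h | h
  · have : Fact (1 < N) := ⟨h⟩
    rw [ZMod.val_one]
    rcases Nat.lt_or_ge (i.val + 1) N with h2 | h2
    · left; exact Nat.mod_eq_of_lt h2
    · right
      have : i.val + 1 = N := by omega
      rw [this]; simp; omega
  · have : N = 1 := by omega
    subst this
    right
    omega

lemma adj_cases {N : ℕ} [NeZero N] {C : Type*} {c : ZMod N → C} {u v : Set.range c}
    (h : (coloringGraph c).Adj u v) :
    ∃ i j : ℕ, i < N ∧ j < N ∧ c (i : ZMod N) = u.1 ∧ c (j : ZMod N) = v.1 ∧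
      (j = i + 1 ∨ i = j + 1 ∨ (i = 0 ∧ j = N - 1) ∨ (j = 0 ∧ i = N - 1)) := by
  rw [coloringGraph, SimpleGraph.fromRel_adj] at h
  rcases h.2 with ⟨i, h1, h2⟩ | ⟨i, h1, h2⟩
  · refine ⟨i.val, (i+1).val, ZMod.val_lt _, ZMod.val_lt _, by simpa using h1,
      by rw [ZMod.natCast_zmod_val]; exact h2, ?_⟩
    have := val_succ_cases i
    omega
  · refine ⟨(i+1).val, i.val, ZMod.val_lt _, ZMod.val_lt _,
      by rw [ZMod.natCast_zmod_val]; exact h2, by simpa using h1, ?_⟩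
    have := val_succ_cases i
    omega

lemma CR.walk {N : ℕ} [NeZero N] {C : Type*} {c : ZMod N → C} {s : ZMod N → Bool}
    {u v : Set.range c} (w : (coloringGraph c).Walk u v) :
    ∀ {i n : ℕ}, CR c s i n → c (i : ZMod N) = u.1 → ∀ j : ℕ, j < N → c (j : ZMod N) = v.1 →
    ∃ n', n' ≤ n + w.length ∧ CR c s j n' := by
  induction w with
  | nil =>
    intro i n hi hu j hj hv
    exact ⟨n, by simp, CR.jump hi hj (hu.trans hv.symm)⟩
  | cons hadj w ih =>
    intro i n hi hu j hj hv
    obtain ⟨a, b, ha, hb, hca, hcb, hab⟩ := adj_cases hadj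
    have h1 : CR c s a n := CR.jump hi ha (hu.trans hca.symm)
    have h2 := CR.step h1 hb hab
    obtain ⟨n', h3, h4⟩ := ih h2 hcb j hj hv
    refine ⟨n', ?_, h4⟩
    have := bcost_le_one (s (a : ZMod N)) (s (b : ZMod N))
    simp only [SimpleGraph.Walk.length_cons]
    omega

lemma walk_cross {N : ℕ} [NeZero N] {C : Type*} {c : ZMod N → C} (k : ℕ)
    {u v : Set.range c} (w : (coloringGraph c).Walk u v) :
    (∀ z ∈ w.support, z.1 ≠ c 0 ∧ z.1 ≠ c (k : ZMod N)) →
    (∃ a : ℕ, a < k ∧ c (a : ZMod N) = u.1) →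
    (∃ b : ℕ, k < b ∧ b < N ∧ c (b : ZMod N) = v.1) →
    ∃ a b : ℕ, a < k ∧ k < b ∧ b < N ∧ c (a : ZMod N) = c (b : ZMod N) ∧
      ∃ z ∈ w.support, z.1 = c (a : ZMod N) := by
  induction w with
  | nil =>
    rintro _ ⟨a, h1, h2⟩ ⟨b, h3, h4, h5⟩
    exact ⟨a, b, h1, h3, h4, h2.trans h5.symm, _, by simp, h2.symm⟩
  | @cons u u' v hadj w ih =>
    rintro hav ⟨a, h1, h2⟩ hb
    by_cases hu : ∃ b : ℕ, k < b ∧ b < N ∧ c (b : ZMod N) = u.1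
    · obtain ⟨b, h3, h4, h5⟩ := hu
      exact ⟨a, b, h1, h3, h4, h2.trans h5.symm, u, by simp, h2.symm⟩
    obtain ⟨p, q, hp, hq, hcp, hcq, hpq⟩ := adj_cases hadj
    have hu0 := hav u (by simp)
    have hu1 := hav u' (by simp)
    have hp0 : p ≠ 0 := by rintro rfl; exact hu0.1 (by simpa using hcp.symm)
    have hpk : p ≠ k := by rintro rfl; exact hu0.2 hcp.symm
    have hq0 : q ≠ 0 := by rintro rfl; exact hu1.1 (by simpa using hcq.symm)
    have hqk : q ≠ k := by rintro rfl; exact hu1.2 hcq.symm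
    have hpk' : ¬ k < p := fun h => hu ⟨p, h, hp, hcp⟩
    obtain ⟨a', b', h3, h4, h5, h6, z, h7, h8⟩ := ih
      (fun z hz => hav z (by simp [hz])) ⟨q, by omega, hcq⟩ hb
    exact ⟨a', b', h3, h4, h5, h6, z, by simp [h7], h8⟩

lemma coloringGraph_reach {N : ℕ} [NeZero N] {C : Type*} (c : ZMod N → C) (i : ℕ) :
    (coloringGraph c).Reachable (vert c 0) (vert c (i : ZMod N)) := by
  induction i with
  | zero => simp
  | succ k ih =>
    refine ih.trans ?_
    by_cases h : vert c (k : ZMod N) = vert c ((k + 1 : ℕ) : ZMod N)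
    · rw [h]
    · apply SimpleGraph.Adj.reachable
      rw [coloringGraph, SimpleGraph.fromRel_adj]
      exact ⟨h, Or.inl ⟨(k : ZMod N), rfl, by simp [vert]⟩⟩

lemma height_of_coloring {N : ℕ} [NeZero N] {C : Type*} (c : ZMod N → C) (s : ZMod N → Bool)
    (hnc : Noncrossing c) (hs : ∀ i j, c i = c j → s i = s j) :
    ∃ h : ℕ → ℕ, (∀ i, i < N → h i % 2 = bcost (s 0) (s (i : ZMod N))) ∧
      ∀ i k j : ℕ, i ≤ k → k ≤ j → j < N →
        h i + h j ≤ 2 * h k + overlap c (i : ZMod N) (j : ZMod N) := by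
  classical
  refine ⟨fun i => sInf {n | CR c s i n}, ?_, ?_⟩
  · intro i hi
    have : sInf {n | CR c s i n} ∈ {n | CR c s i n} := Nat.sInf_mem (CR.exists c s i hi)
    exact CR.parity hs this
  · intro i k j hik hkj hj
    have hk : CR c s k (sInf {n | CR c s k n}) :=
      Nat.sInf_mem (CR.exists c s k (by omega))
    simp only
    obtain ⟨w, hw⟩ := ((coloringGraph_reach c i).symm.trans
      (coloringGraph_reach c j)).exists_walk_length_eq_dist
    have key : ∃ m n : ℕ, n ≤ sInf {n | CR c s k n} ∧ CR c s m n ∧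
        ∃ z ∈ w.support, z.1 = c (m : ZMod N) := by
      by_contra hcon
      push Not at hcon
      have h0 : ∀ z ∈ w.support, z.1 ≠ c 0 ∧ z.1 ≠ c (k : ZMod N) := fun z hz =>
        ⟨by simpa using hcon 0 0 (Nat.zero_le _) CR.start z hz, hcon k _ le_rfl hk z hz⟩
      have hik' : i ≠ k := by
        rintro rfl; exact (h0 _ w.start_mem_support).2 rfl
      have hjk' : j ≠ k := by
        rintro rfl; exact (h0 _ w.end_mem_support).2 rfl
      obtain ⟨a, b, h1, h2, h3, h4, z, h5, h6⟩ := walk_cross k w h0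
        ⟨i, by omega, rfl⟩ ⟨j, by omega, hj, rfl⟩
      obtain ⟨m, n, h7, h8, h9⟩ := CR.enter hnc (by omega) h3 h4 hk h1.le h2.le
      exact hcon m n h7 h9 z h5 (h6.trans h8.symm)
    obtain ⟨m, n, hn, hm, z, hz, hzm⟩ := key
    obtain ⟨n1, h1, h2⟩ := CR.walk (w.dropUntil z hz) hm hzm.symm j hj rfl
    obtain ⟨n2, h3, h4⟩ := CR.walk (w.takeUntil z hz).reverse hm hzm.symm i (by omega) rfl
    have e1 : sInf {n | CR c s j n} ≤ n1 := Nat.sInf_le h2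
    have e2 : sInf {n | CR c s i n} ≤ n2 := Nat.sInf_le h4
    have e3 := congrArg SimpleGraph.Walk.length (w.take_spec hz)
    rw [SimpleGraph.Walk.length_append] at e3
    rw [SimpleGraph.Walk.length_reverse] at h3
    rw [overlap, ← hw]
    omega

/-! ### The grid: from a bit function on pairs to a height function -/

/-- Moves in the triangular grid. -/
def GMove (p q p' q' : ℕ) : Prop :=
  (p' = p ∧ (q' = q + 1 ∨ q = q' + 1)) ∨ (q' = q ∧ (p' = p + 1 ∨ p = p' + 1)) ∨
    (p = q ∧ p' = q' ∧ (p' = p + 1 ∨ p = p' + 1))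

/-- Reachability from the corner of the grid, counting bit changes. -/
inductive GR (g : ℕ → ℕ → Bool) : ℕ → ℕ → ℕ → Prop
  | start : GR g 0 0 0
  | step {p q n p' q' : ℕ} : GR g p q n → p' ≤ q' → GMove p q p' q' →
      GR g p' q' (n + bcost (g p q) (g p' q'))

lemma GR.le {g : ℕ → ℕ → Bool} {p q n : ℕ} (h : GR g p q n) : p ≤ q := by
  cases h with
  | start => exact le_rfl
  | step _ h _ => exact h

lemma GR.parity {g : ℕ → ℕ → Bool} {p q n : ℕ} (h : GR g p q n) :
    n % 2 = bcost (g 0 0) (g p q) := by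
  induction h with
  | start => simp [bcost]
  | step _ _ _ ih => exact bcost_parity' _ _ _ _ ih

lemma GR.exists (g : ℕ → ℕ → Bool) (k : ℕ) : ∃ n, GR g k k n := by
  induction k with
  | zero => exact ⟨0, GR.start⟩
  | succ k ih =>
    obtain ⟨n, hn⟩ := ih
    exact ⟨_, GR.step hn le_rfl (Or.inr (Or.inr ⟨rfl, rfl, Or.inl rfl⟩))⟩

lemma GR.enter {g : ℕ → ℕ → Bool} {i j p q n : ℕ} (h : GR g p q n) :
    i ≤ p → q ≤ j → ∃ p' q' n', n' ≤ n ∧ i ≤ p' ∧ q' ≤ j ∧ (p' = i ∨ q' = j) ∧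
      GR g p' q' n' := by
  induction h with
  | start =>
    intro h1 h2
    exact ⟨0, 0, 0, le_rfl, h1, h2, by omega, GR.start⟩
  | @step p q n p' q' h hle hmv ih =>
    intro h1 h2
    by_cases hin : i ≤ p ∧ q ≤ j
    · obtain ⟨a, b, n', h3, h4⟩ := ih hin.1 hin.2
      exact ⟨a, b, n', h3.trans (Nat.le_add_right _ _), h4⟩
    · refine ⟨p', q', _, le_rfl, h1, h2, ?_, GR.step h hle hmv⟩
      unfold GMove at hmv
      clear ih
      omega

/-- Cost of moving along the vertical part of a hook. -/
def vcost (g : ℕ → ℕ → Bool) (i a b : ℕ) : ℕ :=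
  ∑ q ∈ Finset.Ico a b, bcost (g i q) (g i (q + 1))

/-- Cost of moving along the horizontal part of a hook. -/
def hcost (g : ℕ → ℕ → Bool) (j a b : ℕ) : ℕ :=
  ∑ p ∈ Finset.Ico a b, bcost (g p j) (g (p + 1) j)

lemma GR.up {g : ℕ → ℕ → Bool} {i a n : ℕ} (h : GR g i a n) (b : ℕ) (hab : a ≤ b) :
    GR g i b (n + vcost g i a b) := by
  have hle := h.le
  induction b, hab using Nat.le_induction with
  | base => simpa [vcost] using h
  | succ b hab ih =>
    have : vcost g i a (b + 1) = vcost g i a b + bcost (g i b) (g i (b + 1)) := by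
      rw [vcost, Finset.sum_Ico_succ_top hab]; rfl
    rw [this, ← add_assoc]
    exact GR.step ih (by omega) (Or.inl ⟨rfl, Or.inl rfl⟩)

lemma GR.down {g : ℕ → ℕ → Bool} {i a : ℕ} (hia : i ≤ a) (b : ℕ) (hab : a ≤ b) :
    ∀ {n : ℕ}, GR g i b n → GR g i a (n + vcost g i a b) := by
  induction b, hab using Nat.le_induction with
  | base => intro n h; simpa [vcost] using h
  | succ b hab ih =>
    intro n h
    have : vcost g i a (b + 1) = vcost g i a b + bcost (g i b) (g i (b + 1)) := by
      rw [vcost, Finset.sum_Ico_succ_top hab]; rfl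
    rw [this, bcost_comm, add_comm (vcost g i a b), ← add_assoc]
    exact ih (GR.step h (by omega) (Or.inl ⟨rfl, Or.inr rfl⟩))

lemma GR.right {g : ℕ → ℕ → Bool} {j a n : ℕ} (h : GR g a j n) (b : ℕ) (hab : a ≤ b) :
    b ≤ j → GR g b j (n + hcost g j a b) := by
  induction b, hab using Nat.le_induction with
  | base => intro _; simpa [hcost] using h
  | succ b hab ih =>
    intro hb
    have : hcost g j a (b + 1) = hcost g j a b + bcost (g b j) (g (b + 1) j) := by
      rw [hcost, Finset.sum_Ico_succ_top hab]; rfl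
    rw [this, ← add_assoc]
    exact GR.step (ih (by omega)) (by omega) (Or.inr (Or.inl ⟨rfl, Or.inl rfl⟩))

lemma GR.left {g : ℕ → ℕ → Bool} {j a : ℕ} (b : ℕ) (hab : a ≤ b) :
    b ≤ j → ∀ {n : ℕ}, GR g b j n → GR g a j (n + hcost g j a b) := by
  induction b, hab using Nat.le_induction with
  | base => intro _ n h; simpa [hcost] using h
  | succ b hab ih =>
    intro hb n h
    have : hcost g j a (b + 1) = hcost g j a b + bcost (g b j) (g (b + 1) j) := by
      rw [hcost, Finset.sum_Ico_succ_top hab]; rfl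
    rw [this, bcost_comm, add_comm (hcost g j a b), ← add_assoc]
    exact ih (by omega) (GR.step h (by omega) (Or.inr (Or.inl ⟨rfl, Or.inr rfl⟩)))

lemma vcost_split (g : ℕ → ℕ → Bool) (i : ℕ) {a b d : ℕ} (h1 : a ≤ b) (h2 : b ≤ d) :
    vcost g i a b + vcost g i b d = vcost g i a d :=
  Finset.sum_Ico_consecutive _ h1 h2

lemma hcost_split (g : ℕ → ℕ → Bool) (i : ℕ) {a b d : ℕ} (h1 : a ≤ b) (h2 : b ≤ d) :
    hcost g i a b + hcost g i b d = hcost g i a d :=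
  Finset.sum_Ico_consecutive _ h1 h2

lemma height_of_grid (g : ℕ → ℕ → Bool) :
    ∃ h : ℕ → ℕ, (∀ k, h (k + 1) ≤ h k + 1 ∧ h k ≤ h (k + 1) + 1) ∧
      (∀ k, h k % 2 = bcost (g 0 0) (g k k)) ∧
      ∀ i k j : ℕ, i ≤ k → k ≤ j → h i + h j ≤ 2 * h k + (vcost g i i j + hcost g j i j) := by
  have hmem : ∀ k, GR g k k (sInf {n | GR g k k n}) := fun k => Nat.sInf_mem (GR.exists g k)
  have hle : ∀ k n, GR g k k n → sInf {n | GR g k k n} ≤ n := fun k n h => Nat.sInf_le h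
  refine ⟨fun k => sInf {n | GR g k k n}, ?_, ?_, ?_⟩
  · intro k
    constructor
    · refine (hle _ _ (GR.step (hmem k) le_rfl
        (Or.inr (Or.inr ⟨rfl, rfl, Or.inl rfl⟩)))).trans ?_
      exact Nat.add_le_add_left (bcost_le_one (g k k) (g (k+1) (k+1))) _
    · refine (hle _ _ (GR.step (hmem (k+1)) le_rfl
        (Or.inr (Or.inr ⟨rfl, rfl, Or.inr rfl⟩)))).trans ?_
      exact Nat.add_le_add_left (bcost_le_one (g (k+1) (k+1)) (g k k)) _
  · intro k
    exact (hmem k).parity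
  · intro i k j hik hkj
    obtain ⟨p, q, n, hn, hp, hq, hpq, hG⟩ := (hmem k).enter hik hkj
    have hpq' := hG.le
    simp only
    rcases hpq with rfl | rfl
    · have e1 := hle _ _ (GR.down le_rfl q hpq' hG)
      have e2 := hle _ _ ((hG.up j hq).right j (by omega) le_rfl)
      have e3 := vcost_split g p hpq' hq
      omega
    · have e1 := hle _ _ (hG.right q hpq' le_rfl)
      have e2 := hle _ _ (GR.down le_rfl q (by omega) (GR.left p hp hpq' hG))
      have e3 := hcost_split g q hp hpq'
      omega

/-! ### Right-hand side: from a height function to a noncrossing coloring -/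

/-- `i ≤ j` have the same color in the contour tree of `h`. -/
def HRel (h : ℕ → ℕ) (i j : ℕ) : Prop :=
  i ≤ j ∧ h i = h j ∧ ∀ k, i ≤ k → k ≤ j → h i ≤ h k

/-- The first index with the same color as `i`. -/
noncomputable def hcol (h : ℕ → ℕ) (i : ℕ) : ℕ := sInf {j | HRel h j i}

lemma hcol_mem (h : ℕ → ℕ) (i : ℕ) : HRel h (hcol h i) i := by
  have : i ∈ {j | HRel h j i} :=
    ⟨le_rfl, rfl, fun k h1 h2 => by rw [le_antisymm h1 h2]⟩
  exact Nat.sInf_mem ⟨i, this⟩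

lemma hcol_le (h : ℕ → ℕ) {i j : ℕ} (hr : HRel h j i) : hcol h i ≤ j := Nat.sInf_le hr

lemma HRel.trans {h : ℕ → ℕ} {i j k : ℕ} (h1 : HRel h i j) (h2 : HRel h j k) : HRel h i k := by
  refine ⟨h1.1.trans h2.1, h1.2.1.trans h2.2.1, fun m hm1 hm2 => ?_⟩
  rcases le_total m j with hj | hj
  · exact h1.2.2 m hm1 hj
  · rw [h1.2.1]; exact h2.2.2 m hj hm2

lemma hcol_eq {h : ℕ → ℕ} {i j : ℕ} (hr : HRel h i j) : hcol h i = hcol h j := by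
  have a1 := hcol_mem h i
  have a2 := hcol_mem h j
  have b1 := hcol_le h (a1.trans hr)
  refine le_antisymm ?_ b1
  apply hcol_le
  have := a1.1
  refine ⟨by omega, a2.2.1.trans hr.2.1.symm, fun k h1 h2 => a2.2.2 k h1 (h2.trans hr.1)⟩

lemma hrel_of_hcol {h : ℕ → ℕ} {i j : ℕ} (hij : i ≤ j) (he : hcol h i = hcol h j) :
    HRel h i j := by
  have a1 := hcol_mem h i
  have a2 := hcol_mem h j
  rw [← he] at a2
  refine ⟨hij, a1.2.1.symm.trans a2.2.1, fun k h1 h2 => ?_⟩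
  rw [← a1.2.1]
  exact a2.2.2 k (a1.1.trans h1) h2

/-- The coloring attached to a height function. -/
noncomputable def hcolor (N : ℕ) (h : ℕ → ℕ) (i : ZMod N) : ZMod N := (hcol h i.val : ℕ)

lemma hcolor_natCast {N : ℕ} (h : ℕ → ℕ) {i : ℕ} (hi : i < N) :
    hcolor N h (i : ZMod N) = (hcol h i : ℕ) := by
  rw [hcolor, ZMod.val_natCast_of_lt hi]

lemma hcolor_inj {N : ℕ} (h : ℕ → ℕ) {i j : ℕ} (hi : i < N) (hj : j < N) :
    hcolor N h (i : ZMod N) = hcolor N h (j : ZMod N) ↔ hcol h i = hcol h j := by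
  rw [hcolor_natCast h hi, hcolor_natCast h hj]
  constructor
  · intro he
    have := congrArg ZMod.val he
    have h1 := (hcol_mem h i).1
    have h2 := (hcol_mem h j).1
    rwa [ZMod.val_natCast_of_lt (by omega), ZMod.val_natCast_of_lt (by omega)] at this
  · intro he; rw [he]

lemma hcolor_noncrossing {N : ℕ} [NeZero N] (h : ℕ → ℕ) : Noncrossing (hcolor N h) := by
  rintro ⟨p, q, r, s, hpq, hqr, hrs, hs, h1, h2, h3⟩
  have hN : 0 < N := Nat.pos_of_ne_zero (NeZero.ne N)
  rw [hcolor_inj h (by omega) (by omega)] at h1 h2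
  apply h3
  rw [hcolor_inj h (by omega) (by omega)]
  have a1 := hrel_of_hcol (by omega) h1
  have a2 := hrel_of_hcol (by omega) h2
  apply hcol_eq
  have e1 := a1.2.2 q (by omega) (by omega)
  have e2 := a2.2.2 r (by omega) (by omega)
  have e3 := a1.2.1
  exact ⟨hpq.le, by omega, fun k hk1 hk2 => a1.2.2 k hk1 (by omega)⟩

/-- There is a walk of length at most `n` between the colors of `i` and `j`. -/
def SW {N : ℕ} {C : Type*} (c : ZMod N → C) (u v : Set.range c) (n : ℕ) : Prop :=
  ∃ w : (coloringGraph c).Walk u v, w.length ≤ n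

lemma SW.trans {N : ℕ} {C : Type*} {c : ZMod N → C} {u v z : Set.range c} {m n : ℕ}
    (h1 : SW c u v m) (h2 : SW c v z n) : SW c u z (m + n) := by
  obtain ⟨w1, h1⟩ := h1
  obtain ⟨w2, h2⟩ := h2
  exact ⟨w1.append w2, by rw [SimpleGraph.Walk.length_append]; omega⟩

lemma SW.symm {N : ℕ} {C : Type*} {c : ZMod N → C} {u v : Set.range c} {m : ℕ}
    (h1 : SW c u v m) : SW c v u m := by
  obtain ⟨w1, h1⟩ := h1
  exact ⟨w1.reverse, by rwa [SimpleGraph.Walk.length_reverse]⟩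

lemma SW.of_eq {N : ℕ} {C : Type*} {c : ZMod N → C} {u v : Set.range c}
    (h1 : u = v) (m : ℕ) : SW c u v m := by
  subst h1
  exact ⟨SimpleGraph.Walk.nil, by simp⟩

lemma SW.succ {N : ℕ} {C : Type*} (c : ZMod N → C) (i : ℕ) :
    SW c (vert c (i : ZMod N)) (vert c ((i + 1 : ℕ) : ZMod N)) 1 := by
  by_cases h : vert c (i : ZMod N) = vert c ((i + 1 : ℕ) : ZMod N)
  · exact SW.of_eq h 1
  · have : (coloringGraph c).Adj (vert c (i : ZMod N)) (vert c ((i + 1 : ℕ) : ZMod N)) := by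
      rw [coloringGraph, SimpleGraph.fromRel_adj]
      exact ⟨h, Or.inl ⟨(i : ZMod N), rfl, by simp [vert]⟩⟩
    exact ⟨this.toWalk, by simp⟩

lemma vert_hcolor_eq {N : ℕ} {h : ℕ → ℕ} {i j : ℕ} (hj : j < N) (hr : HRel h i j) :
    vert (hcolor N h) (i : ZMod N) = vert (hcolor N h) (j : ZMod N) := by
  have := hr.1
  exact Subtype.ext ((hcolor_inj h (by omega) hj).2 (hcol_eq hr))

lemma sw_desc {N : ℕ} {h : ℕ → ℕ} (hst : ∀ k, h (k + 1) ≤ h k + 1 ∧ h k ≤ h (k + 1) + 1)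
    (k : ℕ) (hk : k < N) : ∀ d i : ℕ, i + d = k → (∀ t, i ≤ t → t ≤ k → h k ≤ h t) →
    SW (hcolor N h) (vert _ (i : ZMod N)) (vert _ (k : ZMod N)) (h i - h k) := by
  intro d
  induction d using Nat.strong_induction_on with
  | _ d ih =>
    intro i hid hmin
    rcases Nat.eq_zero_or_pos d with rfl | hd
    · have : i = k := by omega
      subst this
      exact SW.of_eq rfl _
    have hex : ∃ t, i < t ∧ h t ≤ h i := ⟨k, by omega, hmin i le_rfl (by omega)⟩
    classical
    obtain ⟨ht1, ht2⟩ := Nat.find_spec hex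
    have ht3 : Nat.find hex ≤ k := Nat.find_min' hex ⟨by omega, hmin i le_rfl (by omega)⟩
    have ht4 : ∀ m, i < m → m < Nat.find hex → h i < h m := fun m h1 h2 => by
      by_contra hc
      exact Nat.find_min hex h2 ⟨h1, by omega⟩
    generalize Nat.find hex = t at *
    have hrec := ih (k - t) (by omega) t (by omega) (fun m h1 h2 => hmin m (by omega) h2)
    have htk := hmin t (by omega) ht3
    rcases Nat.lt_or_ge (h t) (h i) with hlt | hge
    · have ht5 : t = i + 1 := by
        by_contra hne
        have := ht4 (t - 1) (by omega) (by omega)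
        have h2 := (hst (t - 1)).2
        rw [show t - 1 + 1 = t by omega] at h2
        omega
      subst ht5
      have := (SW.succ (hcolor N h) i).trans hrec
      have h2 := (hst i).2
      rwa [show 1 + (h (i + 1) - h k) = h i - h k by omega] at this
    · have : HRel h i t := by
        refine ⟨ht1.le, by omega, fun m h1 h2 => ?_⟩
        rcases Nat.eq_or_lt_of_le h1 with rfl | h1
        · exact le_rfl
        rcases Nat.eq_or_lt_of_le h2 with rfl | h2
        · omega
        · exact (ht4 m h1 h2).le
      rw [vert_hcolor_eq (by omega) this, show h i = h t by omega]
      exact hrec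

lemma sw_asc {N : ℕ} {h : ℕ → ℕ} (hst : ∀ k, h (k + 1) ≤ h k + 1 ∧ h k ≤ h (k + 1) + 1)
    (k : ℕ) : ∀ d j : ℕ, k + d = j → j < N → (∀ t, k ≤ t → t ≤ j → h k ≤ h t) →
    SW (hcolor N h) (vert _ (k : ZMod N)) (vert _ (j : ZMod N)) (h j - h k) := by
  intro d
  induction d using Nat.strong_induction_on with
  | _ d ih =>
    intro j hid hj hmin
    rcases Nat.eq_zero_or_pos d with rfl | hd
    · have : k = j := by omega
      subst this
      exact SW.of_eq rfl _
    have hex : ∃ e, 0 < e ∧ e ≤ d ∧ h (j - e) ≤ h j :=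
      ⟨d, hd, le_rfl, by
        rw [show j - d = k by omega]; exact hmin j (by omega) le_rfl⟩
    classical
    obtain ⟨ht1, ht3, ht2⟩ := Nat.find_spec hex
    have ht4 : ∀ m, 0 < m → m < Nat.find hex → h j < h (j - m) := fun m h1 h2 => by
      by_contra hc
      exact Nat.find_min hex h2 ⟨h1, by omega, by omega⟩
    generalize Nat.find hex = e at *
    obtain ⟨t, rfl⟩ : ∃ t, j = t + e := ⟨j - e, by omega⟩
    rw [Nat.add_sub_cancel] at ht2
    have hrec := ih (t - k) (by omega) t (by omega) (by omega)
      (fun m h1 h2 => hmin m h1 (by omega))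
    have htk := hmin t (by omega) (by omega)
    rcases Nat.lt_or_ge (h t) (h (t + e)) with hlt | hge
    · have ht5 : e = 1 := by
        by_contra hne
        have := ht4 (e - 1) (by omega) (by omega)
        rw [show t + e - (e - 1) = t + 1 by omega] at this
        have h2 := (hst t).1
        omega
      subst ht5
      have := hrec.trans (SW.succ (hcolor N h) t)
      have h2 := (hst t).1
      rwa [show (h t - h k) + 1 = h (t + 1) - h k by omega] at this
    · have : HRel h t (t + e) := by
        refine ⟨by omega, by omega, fun m h1 h2 => ?_⟩
        rcases Nat.eq_or_lt_of_le h1 with rfl | h1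
        · exact le_rfl
        rcases Nat.eq_or_lt_of_le h2 with rfl | h2
        · omega
        · have := ht4 (t + e - m) (by omega) (by omega)
          rw [show t + e - (t + e - m) = m by omega] at this
          omega
      rw [← vert_hcolor_eq hj this, show h (t + e) = h t by omega]
      exact hrec

lemma hcolor_overlap {N : ℕ} {h : ℕ → ℕ}
    (hst : ∀ k, h (k + 1) ≤ h k + 1 ∧ h k ≤ h (k + 1) + 1)
    {i j : ℕ} (hij : i ≤ j) (hj : j < N) :
    ∃ k, i ≤ k ∧ k ≤ j ∧
      2 * h k + overlap (hcolor N h) (i : ZMod N) (j : ZMod N) ≤ h i + h j := by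
  obtain ⟨k, hk, hmin⟩ := Finset.exists_min_image (Finset.Icc i j) h ⟨i, by simp [hij]⟩
  rw [Finset.mem_Icc] at hk
  refine ⟨k, hk.1, hk.2, ?_⟩
  have hmin' : ∀ t, i ≤ t → t ≤ j → h k ≤ h t := fun t h1 h2 =>
    hmin t (Finset.mem_Icc.2 ⟨h1, h2⟩)
  obtain ⟨w, hw⟩ := (sw_desc hst k (by omega) (k - i) i (by omega)
    (fun t h1 h2 => hmin' t h1 (by omega))).trans
    (sw_asc hst k (j - k) j (by omega) hj (fun t h1 h2 => hmin' t (by omega) h2))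
  have h1 : overlap (hcolor N h) (i : ZMod N) (j : ZMod N) ≤ w.length :=
    SimpleGraph.dist_le w
  have h2 := hmin' i le_rfl hij
  have h3 := hmin' j hij le_rfl
  omega

/-! ### Range minima -/

/-- Minimum of `h` on `[p, q]`. -/
noncomputable def rmin (h : ℕ → ℕ) (p q : ℕ) : ℕ := sInf {a | ∃ k, p ≤ k ∧ k ≤ q ∧ h k = a}

lemma rmin_attained (h : ℕ → ℕ) {p q : ℕ} (hpq : p ≤ q) :
    ∃ k, p ≤ k ∧ k ≤ q ∧ h k = rmin h p q :=
  Nat.sInf_mem (s := {a | ∃ k, p ≤ k ∧ k ≤ q ∧ h k = a}) ⟨h p, p, le_rfl, hpq, rfl⟩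

lemma rmin_le (h : ℕ → ℕ) {p q k : ℕ} (h1 : p ≤ k) (h2 : k ≤ q) : rmin h p q ≤ h k :=
  Nat.sInf_le ⟨k, h1, h2, rfl⟩

lemma rmin_self (h : ℕ → ℕ) (p : ℕ) : rmin h p p = h p := by
  obtain ⟨k, h1, h2, h3⟩ := rmin_attained h (le_refl p)
  rw [← h3, le_antisymm h1 h2]

lemma rmin_anti (h : ℕ → ℕ) {p q p' q' : ℕ} (h1 : p ≤ p') (h2 : p' ≤ q') (h3 : q' ≤ q) :
    rmin h p q ≤ rmin h p' q' := by
  obtain ⟨k, a1, a2, a3⟩ := rmin_attained h h2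
  rw [← a3]
  exact rmin_le h (by omega) (by omega)

/-- The bit of the base point, flipped according to the parity of `n`. -/
def pbit (b : Bool) (n : ℕ) : Bool := if n % 2 = 0 then b else !b

lemma pbit_of_parity {n : ℕ} {a b : Bool} (h : n % 2 = bcost a b) : pbit a n = b := by
  unfold pbit; rw [h]; cases a <;> cases b <;> rfl

lemma bcost_pbit_le (b : Bool) {m n : ℕ} (h : m ≤ n) : bcost (pbit b n) (pbit b m) ≤ n - m := by
  rcases Nat.eq_or_lt_of_le h with rfl | h
  · simp [bcost]
  · exact (bcost_le_one _ _).trans (by omega)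

lemma bcost_cast (a b : Bool) : |((a.toNat : ℝ)) - (b.toNat : ℝ)| = (bcost a b : ℝ) := by
  cases a <;> cases b <;> simp [bcost]

lemma vcost_rmin (b : Bool) (h : ℕ → ℕ) (i j : ℕ) (hij : i ≤ j) :
    vcost (fun p q => pbit b (rmin h p q)) i i j + rmin h i j ≤ h i := by
  induction j, hij using Nat.le_induction with
  | base => simp [vcost, rmin_self]
  | succ j hij ih =>
    have h1 := rmin_anti h (le_refl i) hij (Nat.le_succ j)
    have h2 := bcost_pbit_le b h1
    unfold vcost at ih ⊢
    rw [Finset.sum_Ico_succ_top hij]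
    simp only [Nat.succ_eq_add_one] at h1 h2 ih ⊢
    omega

lemma hcost_rmin (b : Bool) (h : ℕ → ℕ) (i j : ℕ) (a : ℕ) (hia : i ≤ a) :
    a ≤ j → hcost (fun p q => pbit b (rmin h p q)) j i a + rmin h i j ≤ rmin h a j := by
  induction a, hia using Nat.le_induction with
  | base => intro _; simp [hcost]
  | succ a hia ih =>
    intro haj
    replace ih := ih (by omega)
    have h1 := rmin_anti h (Nat.le_succ a) haj (le_refl j)
    have h2 := bcost_pbit_le b h1
    rw [bcost_comm] at h2
    unfold hcost at ih ⊢
    rw [Finset.sum_Ico_succ_top hia]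
    simp only [Nat.succ_eq_add_one] at h1 h2 ih ⊢
    omega

lemma main_ineq {L R : ℕ} (α : Fin L → ℝ) (β : Fin R → ℝ)
    (f : (Fin L → Bool) → (Fin R → Bool)) (hf : IsContraction α β f)
    (v : ℕ → ℕ → Fin L → Bool) (i j : ℕ) :
    ∑ r, β r * ((vcost (fun p q => f (v p q) r) i i j +
        hcost (fun p q => f (v p q) r) j i j : ℕ) : ℝ) ≤
      ∑ l, α l * ((vcost (fun p q => v p q l) i i j +
        hcost (fun p q => v p q l) j i j : ℕ) : ℝ) := by
  have hf' : ∀ a b : Fin L → Bool, ∑ r, β r * (bcost (f a r) (f b r) : ℝ) ≤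
      ∑ l, α l * (bcost (a l) (b l) : ℝ) := by
    intro a b
    have := hf a b
    simpa only [bcost_cast] using this
  simp only [vcost, hcost, Nat.cast_add, Nat.cast_sum, mul_add, Finset.mul_sum,
    Finset.sum_add_distrib]
  rw [Finset.sum_comm, Finset.sum_comm (s := Finset.univ) (t := Finset.Ico i j)
    (f := fun r p => β r * (bcost (f (v p j) r) (f (v (p + 1) j) r) : ℝ)),
    Finset.sum_comm (s := Finset.univ) (t := Finset.Ico i j)
    (f := fun l q => α l * (bcost (v i q l) (v i (q + 1) l) : ℝ)),
    Finset.sum_comm (s := Finset.univ) (t := Finset.Ico i j)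
    (f := fun l p => α l * (bcost (v p j l) (v (p + 1) j l) : ℝ))]
  exact add_le_add (Finset.sum_le_sum fun q _ => hf' _ _) (Finset.sum_le_sum fun q _ => hf' _ _)

/-- Existence of a winning strategy in the adversarial coloring game: if a contraction map
exists for the inequality pattern `(α, β, x, y)`, then for every family of noncrossing
colorings `c_l` admissible for the left-hand-side regions `I_l`, there is a family of
noncrossing colorings `c'_r` admissible for the right-hand-side regions `J_r` with
`Σ_l α_l h_{c_l}(i,j) ≥ Σ_r β_r h_{c'_r}(i,j)` for all `i, j`. -/
theorem winning_strategy_exists {n N L R : ℕ} [NeZero N]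
    (ρ : ZMod N → Fin (n + 1)) (O : Fin (n + 1))
    (α : Fin L → ℝ) (β : Fin R → ℝ) (hα : ∀ l, 0 < α l) (hβ : ∀ r, 0 < β r)
    (x : Fin (n + 1) → Fin L → Bool) (y : Fin (n + 1) → Fin R → Bool)
    (hxO : ∀ l, x O l = false) (hyO : ∀ r, y O r = false)
    (f : (Fin L → Bool) → (Fin R → Bool))
    (hf : IsContraction α β f) (hinit : ∀ S : Fin (n + 1), f (x S) = y S)
    {C : Fin L → Type*} (c : (l : Fin L) → ZMod N → C l)
    (hnc : ∀ l, Noncrossing (c l))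
    (hadm : ∀ l, Admissible (c l) {i : ZMod N | x (ρ i) l = true}) :
    ∃ c' : Fin R → ZMod N → ZMod N,
      (∀ r, Noncrossing (c' r)) ∧
      (∀ r, Admissible (c' r) {i : ZMod N | y (ρ i) r = true}) ∧
      ∀ i j : ZMod N,
        ∑ r, β r * (overlap (c' r) i j : ℝ) ≤ ∑ l, α l * (overlap (c l) i j : ℝ) := by
  have hs : ∀ l, ∀ i j, c l i = c l j → x (ρ i) l = x (ρ j) l := by
    intro l i j h
    have := hadm l i j h
    simp only [Set.mem_ofPred_eq] at this
    exact Bool.eq_iff_iff.2 this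
  choose h hpar hov using fun l =>
    height_of_coloring (c l) (fun i => x (ρ i) l) (hnc l) (hs l)
  let v : ℕ → ℕ → Fin L → Bool := fun p q l => pbit (x (ρ 0) l) (rmin (h l) p q)
  have hv : ∀ p : ℕ, p < N → v p p = x (ρ (p : ZMod N)) := by
    intro p hp
    funext l
    simp only [v, rmin_self]
    exact pbit_of_parity (hpar l p hp)
  choose h' hst hpar' hF using fun r : Fin R => height_of_grid (fun p q => f (v p q) r)
  have hN : 0 < N := Nat.pos_of_ne_zero (NeZero.ne N)
  have hy : ∀ r (k : ZMod N), pbit (y (ρ 0) r) (h' r k.val) = y (ρ k) r := by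
    intro r k
    apply pbit_of_parity
    rw [hpar' r k.val, hv 0 hN, hv k.val (ZMod.val_lt k), hinit, hinit]
    simp
  have main : ∀ i j : ℕ, i ≤ j → j < N →
      ∑ r, β r * (overlap (hcolor N (h' r)) (i : ZMod N) (j : ZMod N) : ℝ) ≤
        ∑ l, α l * (overlap (c l) (i : ZMod N) (j : ZMod N) : ℝ) := by
    intro i j hij hj
    refine le_trans (Finset.sum_le_sum fun r _ => ?_)
      ((main_ineq α β f hf v i j).trans (Finset.sum_le_sum fun l _ => ?_))
    · refine mul_le_mul_of_nonneg_left (Nat.cast_le.2 ?_) (hβ r).le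
      obtain ⟨k, h1, h2, h3⟩ := hcolor_overlap (N := N) (hst r) hij hj
      have := hF r i k j h1 h2
      omega
    · refine mul_le_mul_of_nonneg_left (Nat.cast_le.2 ?_) (hα l).le
      obtain ⟨k, h1, h2, h3⟩ := rmin_attained (h l) hij
      have e1 := hov l i k j h1 h2 hj
      have e2 := vcost_rmin (x (ρ 0) l) (h l) i j hij
      have e3 := hcost_rmin (x (ρ 0) l) (h l) i j j hij le_rfl
      rw [rmin_self] at e3
      simp only [v]
      omega
  refine ⟨fun r => hcolor N (h' r), fun r => hcolor_noncrossing _, ?_, ?_⟩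
  · intro r i j hc
    have hc' : hcol (h' r) i.val = hcol (h' r) j.val := by
      rw [← hcolor_inj (h' r) (ZMod.val_lt i) (ZMod.val_lt j)]
      simpa using hc
    have e1 := (hcol_mem (h' r) i.val).2.1
    have e2 := (hcol_mem (h' r) j.val).2.1
    rw [hc'] at e1
    simp only [Set.mem_ofPred_eq]
    rw [← hy r i, ← hy r j, ← e1, ← e2]
  · intro i j
    rcases le_total i.val j.val with hij | hij
    · simpa using main i.val j.val hij (ZMod.val_lt j)
    · have hsym : ∀ r, overlap (hcolor N (h' r)) i j = overlap (hcolor N (h' r)) j i :=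
        fun r => SimpleGraph.dist_comm
      have hsym' : ∀ l, overlap (c l) i j = overlap (c l) j i :=
        fun l => SimpleGraph.dist_comm
      simp only [hsym, hsym']
      simpa using main j.val i.val hij (ZMod.val_lt i)
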